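/- Let (M,g) be a Riemannian manifold, p ∈ M, and suppose normal coordinates x are chosen at p = 0 in a coordinate ball B. Then for A > 0 sufficiently large, the function φ(x) = log|x| + A|x| has the property that its composition with any smooth conformal harmonic immersion u : 𝔻 → B is subharmonic on 𝔻 (i.e. φ is minimal plurisubharmonic near the origin). -/

import Mathlib

open Metric Set Real

noncomputable section

variable {n : ℕ}

/-- Partial derivative in the `k`-th coordinate direction. -/
def pd (f : EuclideanSpace ℝ (Fin n) → ℝ) (x : EuclideanSpace ℝ (Fin n)) (k : Fin n) : ℝ :=
  fderiv ℝ f x (EuclideanSpace.single k 1)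

/-- Christoffel symbols `Γ^k_{ij}` of a metric `g` (given as a matrix field). -/
def christoffel (g : EuclideanSpace ℝ (Fin n) → Matrix (Fin n) (Fin n) ℝ)
    (x : EuclideanSpace ℝ (Fin n)) (k i j : Fin n) : ℝ :=
  (1 / 2) * ∑ l : Fin n, (g x)⁻¹ k l *
    (pd (fun y => g y j l) x i + pd (fun y => g y i l) x j - pd (fun y => g y i j) x l)

/-- `x`-partial of the `i`-th component of `u : ℂ → ℝⁿ`. -/
def px (u : ℂ → EuclideanSpace ℝ (Fin n)) (i : Fin n) (z : ℂ) : ℝ :=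
  fderiv ℝ (fun w => u w i) z 1

/-- `y`-partial of the `i`-th component of `u : ℂ → ℝⁿ`. -/
def py (u : ℂ → EuclideanSpace ℝ (Fin n)) (i : Fin n) (z : ℂ) : ℝ :=
  fderiv ℝ (fun w => u w i) z Complex.I

/-- Laplacian of `f : ℂ → ℝ`. -/
def lap (f : ℂ → ℝ) (z : ℂ) : ℝ :=
  fderiv ℝ (fun w => fderiv ℝ f w 1) z 1 +
    fderiv ℝ (fun w => fderiv ℝ f w Complex.I) z Complex.I

/-- `u` is a harmonic map on `s` with respect to the metric `g`:
`Δu^k + Γ^k_{ij}(u)(∂ₓu^i ∂ₓu^j + ∂ᵧu^i ∂ᵧu^j) = 0`. -/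
def HarmonicWrt (g : EuclideanSpace ℝ (Fin n) → Matrix (Fin n) (Fin n) ℝ)
    (u : ℂ → EuclideanSpace ℝ (Fin n)) (s : Set ℂ) : Prop :=
  ∀ z ∈ s, ∀ k : Fin n,
    lap (fun w => u w k) z + ∑ i : Fin n, ∑ j : Fin n,
      christoffel g (u z) k i j * (px u i z * px u j z + py u i z * py u j z) = 0

/-- `u` is a conformal immersion on `s` with respect to the metric `g`. -/
def ConformalImmersionWrt (g : EuclideanSpace ℝ (Fin n) → Matrix (Fin n) (Fin n) ℝ)
    (u : ℂ → EuclideanSpace ℝ (Fin n)) (s : Set ℂ) : Prop :=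
  (∀ z ∈ s, Function.Injective (fderiv ℝ u z)) ∧
  ∃ φ : ℂ → ℝ, ∀ z ∈ s, ∀ v w : ℂ,
    (∑ i : Fin n, ∑ j : Fin n, g (u z) i j * fderiv ℝ u z v i * fderiv ℝ u z w j)
      = Real.exp (φ z) * (v * (starRingEnd ℂ) w).re


lemma hasDerivAt_param {F F' : ℝ → ℝ → ℝ}
    (hF : Continuous (fun q : ℝ × ℝ => F q.1 q.2)) (hF' : Continuous (fun q : ℝ × ℝ => F' q.1 q.2))
    (hd : ∀ t θ, HasDerivAt (fun s => F s θ) (F' t θ) t) (a b t : ℝ) :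
    HasDerivAt (fun s => ∫ θ in a..b, F s θ) (∫ θ in a..b, F' t θ) t := by
  obtain ⟨C, hC⟩ := ((isCompact_closedBall t 1).prod (isCompact_uIcc (a := a) (b := b))).exists_bound_of_continuousOn
    hF'.continuousOn
  have hc : ∀ s, Continuous (F s) := fun s => by
    exact hF.comp (by fun_prop : Continuous fun θ : ℝ => (s, θ))
  have hc' : ∀ s, Continuous (F' s) := fun s => by
    exact hF'.comp (by fun_prop : Continuous fun θ : ℝ => (s, θ))
  refine (intervalIntegral.hasDerivAt_integral_of_dominated_loc_of_deriv_le (bound := fun _ => C)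
    (closedBall_mem_nhds t one_pos) (Filter.Eventually.of_forall fun s => (hc s).aestronglyMeasurable)
    ((hc t).intervalIntegrable _ _) (hc' t).aestronglyMeasurable ?_ (by simp) ?_).2
  · refine Filter.Eventually.of_forall fun θ hθ s hs => ?_
    exact hC (s, θ) ⟨hs, uIoc_subset_uIcc hθ⟩
  · exact Filter.Eventually.of_forall fun θ hθ s hs => hd s θ

lemma submean_global (f : ℂ → ℝ) (hf : ContDiff ℝ 2 f) (z : ℂ) (r : ℝ) (hr : 0 < r)
    (hl : ∀ w ∈ ball z r, 0 ≤ lap f w) :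
    2 * π * f z ≤ ∫ θ in (0:ℝ)..(2 * π), f (z + r * Complex.exp (θ * Complex.I)) := by
  set c : ℝ → ℂ := fun θ => Complex.exp (θ * Complex.I) with hc
  have hcc : Continuous c := by fun_prop
  have hcd : ∀ θ, HasDerivAt c (Complex.I * c θ) θ := by
    intro θ
    have h1 : HasDerivAt (fun θ : ℝ => (θ : ℂ) * Complex.I) (1 * Complex.I) θ :=
      (Complex.ofRealCLM.hasDerivAt (x := θ)).mul_const Complex.I
    have := h1.cexp
    simp only [one_mul] at this
    convert this using 1
    simp [hc, mul_comm]
  have hd1 : Differentiable ℝ f := hf.differentiable (by norm_num)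
  have hf1 : ContDiff ℝ 1 (fderiv ℝ f) := hf.fderiv_right (by norm_num)
  have hd2 : Differentiable ℝ (fderiv ℝ f) := hf1.differentiable (by norm_num)
  have hcf : Continuous f := hf.continuous
  have hcf1 : Continuous (fderiv ℝ f) := hf1.continuous
  have hcf2 : Continuous (fderiv ℝ (fderiv ℝ f)) := hf1.continuous_fderiv (by norm_num)
  have hP : ∀ t θ, HasDerivAt (fun s : ℝ => z + (s:ℂ) * c θ) (c θ) t := by
    intro t θ
    have := ((Complex.ofRealCLM.hasDerivAt (x := t)).mul_const (c θ)).const_add z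
    simpa using this
  have hm := hasDerivAt_param (F := fun t θ => f (z + (t:ℂ) * c θ))
    (F' := fun t θ => fderiv ℝ f (z + (t:ℂ) * c θ) (c θ)) (by fun_prop) (by fun_prop)
    (fun t θ => (hd1 _).hasFDerivAt.comp_hasDerivAt t (hP t θ)) 0 (2 * π)
  have hm2 := hasDerivAt_param (F := fun t θ => fderiv ℝ f (z + (t:ℂ) * c θ) (c θ))
    (F' := fun t θ => fderiv ℝ (fderiv ℝ f) (z + (t:ℂ) * c θ) (c θ) (c θ)) (by fun_prop)
    (by fun_prop)
    (fun t θ => by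
      have := ((hd2 _).hasFDerivAt.comp_hasDerivAt t (hP t θ)).clm_apply (hasDerivAt_const t (c θ))
      simpa using this) 0 (2 * π)
  have hper : ∀ t : ℝ, ∫ θ in (0:ℝ)..(2 * π),
      (t * fderiv ℝ (fderiv ℝ f) (z + (t:ℂ) * c θ) (Complex.I * c θ) (Complex.I * c θ)
        - fderiv ℝ f (z + (t:ℂ) * c θ) (c θ)) = 0 := by
    intro t
    have hQ : ∀ θ, HasDerivAt (fun s : ℝ => z + (t:ℂ) * c s) ((t:ℂ) * (Complex.I * c θ)) θ :=
      fun θ => ((hcd θ).const_mul (t:ℂ)).const_add z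
    rw [intervalIntegral.integral_eq_sub_of_hasDerivAt
      (f := fun θ => fderiv ℝ f (z + (t:ℂ) * c θ) (Complex.I * c θ))]
    · simp [hc]
    · intro θ _
      have := ((hd2 _).hasFDerivAt.comp_hasDerivAt θ (hQ θ)).clm_apply
        ((hcd θ).const_mul Complex.I)
      have e1 : (t:ℂ) * (Complex.I * c θ) = t • (Complex.I * c θ) := by simp
      have e2 : Complex.I * (Complex.I * c θ) = - c θ := by
        rw [← mul_assoc, Complex.I_mul_I]; ring
      rw [e1, e2] at this
      refine this.congr_deriv ?_
      rw [map_smul, map_neg]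
      simp [sub_eq_add_neg]
    · apply Continuous.intervalIntegrable
      fun_prop
  have hlap : ∀ w, lap f w = fderiv ℝ (fderiv ℝ f) w 1 1
      + fderiv ℝ (fderiv ℝ f) w Complex.I Complex.I := by
    intro w
    have : ∀ e : ℂ, fderiv ℝ (fun w => fderiv ℝ f w e) w = (fderiv ℝ (fderiv ℝ f) w).flip e := by
      intro e
      have := ((hd2 w).hasFDerivAt.clm_apply (hasFDerivAt_const e w)).fderiv
      simpa using this
    simp [lap, this]
  have htr : ∀ w θ, fderiv ℝ (fderiv ℝ f) w (c θ) (c θ)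
      + fderiv ℝ (fderiv ℝ f) w (Complex.I * c θ) (Complex.I * c θ) = lap f w := by
    intro w θ
    rw [hlap]
    have e1 : c θ = Real.cos θ • (1:ℂ) + Real.sin θ • Complex.I := by
      simp [hc, Complex.exp_mul_I]
    have e2 : Complex.I * c θ = (- Real.sin θ) • (1:ℂ) + Real.cos θ • Complex.I := by
      rw [e1]; simp [mul_add]
      linear_combination (Complex.sin θ) * Complex.I_mul_I
    rw [e2, e1]
    simp only [map_add, map_smul, add_apply, smul_apply, smul_eq_mul]
    linear_combination (fderiv ℝ (fderiv ℝ f) w 1 1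
      + fderiv ℝ (fderiv ℝ f) w Complex.I Complex.I) * Real.sin_sq_add_cos_sq θ
  have hh : ∀ t : ℝ, HasDerivAt (fun t : ℝ => t * ∫ θ in (0:ℝ)..(2 * π), fderiv ℝ f (z + (t:ℂ) * c θ) (c θ))
      (t * ∫ θ in (0:ℝ)..(2 * π), lap f (z + (t:ℂ) * c θ)) t := by
    intro t
    have hmul := (hasDerivAt_id t).mul (hm2 t)
    refine HasDerivAt.congr_deriv hmul ?_
    have h0 := hper t
    rw [intervalIntegral.integral_sub (by apply Continuous.intervalIntegrable; fun_prop)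
      (by apply Continuous.intervalIntegrable; fun_prop), intervalIntegral.integral_const_mul] at h0
    have : ∫ θ in (0:ℝ)..(2 * π), lap f (z + (t:ℂ) * c θ) =
      (∫ θ in (0:ℝ)..(2 * π), fderiv ℝ (fderiv ℝ f) (z + (t:ℂ) * c θ) (c θ) (c θ)) +
      ∫ θ in (0:ℝ)..(2 * π), fderiv ℝ (fderiv ℝ f) (z + (t:ℂ) * c θ) (Complex.I * c θ) (Complex.I * c θ) := by
      rw [← intervalIntegral.integral_add (by apply Continuous.intervalIntegrable; fun_prop)
      (by apply Continuous.intervalIntegrable; fun_prop)]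
      simp only [htr]
    rw [this]
    simp only [id]
    linarith
  have hball : ∀ t ∈ Ioo (0:ℝ) r, ∀ θ, z + (t:ℂ) * c θ ∈ ball z r := by
    intro t ht θ
    simp [hc, Complex.norm_exp_ofReal_mul_I, abs_of_pos ht.1, ht.2]
  have h2pi : (0:ℝ) ≤ 2 * π := by positivity
  have hmono1 : MonotoneOn (fun t : ℝ => t * ∫ θ in (0:ℝ)..(2 * π), fderiv ℝ f (z + (t:ℂ) * c θ) (c θ)) (Icc 0 r) := by
    apply monotoneOn_of_deriv_nonneg (convex_Icc 0 r)
    · exact fun t _ => (hh t).continuousAt.continuousWithinAt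
    · exact fun t _ => (hh t).differentiableAt.differentiableWithinAt
    · intro t ht
      rw [interior_Icc] at ht
      rw [(hh t).deriv]
      exact mul_nonneg ht.1.le (intervalIntegral.integral_nonneg h2pi
        fun θ _ => hl _ (hball t ht θ))
  have hmono : MonotoneOn (fun t : ℝ => ∫ θ in (0:ℝ)..(2 * π), f (z + (t:ℂ) * c θ)) (Icc 0 r) := by
    apply monotoneOn_of_deriv_nonneg (convex_Icc 0 r)
    · exact fun t _ => (hm t).continuousAt.continuousWithinAt
    · exact fun t _ => (hm t).differentiableAt.differentiableWithinAt
    · intro t ht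
      rw [interior_Icc] at ht
      rw [(hm t).deriv]
      have := hmono1 ⟨le_rfl, hr.le⟩ ⟨ht.1.le, ht.2.le⟩ ht.1.le
      simp only [zero_mul] at this
      exact nonneg_of_mul_nonneg_right this ht.1
  have := hmono ⟨le_rfl, hr.le⟩ ⟨hr.le, le_rfl⟩ hr.le
  simpa using this

lemma lap_congr {f g : ℂ → ℝ} {w : ℂ} (h : f =ᶠ[nhds w] g) : lap f w = lap g w := by
  have : ∀ e : ℂ, (fun w => fderiv ℝ f w e) =ᶠ[nhds w] (fun w => fderiv ℝ g w e) := by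
    intro e
    filter_upwards [h.fderiv (𝕜 := ℝ)] with x hx
    rw [hx]
  simp only [lap, (this 1).fderiv_eq, (this Complex.I).fderiv_eq]

lemma submean_local (f : ℂ → ℝ) (hf : ContDiffOn ℝ 2 f (ball 0 1)) (z : ℂ) (r : ℝ) (hr : 0 < r)
    (hz : closedBall z r ⊆ ball (0:ℂ) 1)
    (hl : ∀ w ∈ ball (0:ℂ) 1, 0 ≤ lap f w) :
    2 * π * f z ≤ ∫ θ in (0:ℝ)..(2 * π), f (z + r * Complex.exp (θ * Complex.I)) := by
  obtain ⟨d, hd, hsub⟩ := (isCompact_closedBall z r).exists_cthickening_subset_open isOpen_ball hz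
  rw [cthickening_closedBall hd.le hr.le] at hsub
  let b : ContDiffBump z := ⟨r + d / 2, r + d, by linarith, by linarith⟩
  have hF : ContDiff ℝ 2 (fun w => b w * f w) := by
    rw [contDiff_iff_contDiffAt]
    intro w
    by_cases hw : w ∈ ball (0:ℂ) 1
    · exact b.contDiff.contDiffAt.mul (hf.contDiffAt (isOpen_ball.mem_nhds hw))
    · have hw' : w ∈ (tsupport b)ᶜ := by
        intro h
        rw [b.tsupport_eq] at h
        exact hw (hsub (by rw [add_comm]; exact h))
      have : (fun w => b w * f w) =ᶠ[nhds w] fun _ => 0 := by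
        filter_upwards [(isClosed_tsupport b).isOpen_compl.mem_nhds hw'] with y hy
        rw [image_eq_zero_of_notMem_tsupport hy, zero_mul]
      exact contDiffAt_const.congr_of_eventuallyEq this
  have heq : ∀ w ∈ closedBall z r, (fun w => b w * f w) =ᶠ[nhds w] f := by
    intro w hw
    have : w ∈ ball z (r + d / 2) := by
      rw [mem_closedBall] at hw; rw [mem_ball]; linarith
    filter_upwards [isOpen_ball.mem_nhds this] with y hy
    rw [b.one_of_mem_closedBall (ball_subset_closedBall hy), one_mul]
  have := submean_global _ hF z r hr (fun w hw => by
    rw [lap_congr (heq w (ball_subset_closedBall hw))]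
    exact hl w (hz (ball_subset_closedBall hw)))
  have e0 : b z * f z = f z := (heq z (mem_closedBall_self hr.le)).eq_of_nhds
  rw [e0] at this
  convert this using 1
  apply intervalIntegral.integral_congr
  intro θ _
  have := (heq (z + r * Complex.exp (θ * Complex.I)) (by
    simp [Complex.norm_exp_ofReal_mul_I, abs_of_pos hr])).eq_of_nhds
  exact this.symm

lemma dd_comp {T : ℂ → ℝ} {w : ℂ} (hT : ContDiffAt ℝ 2 T w) {ψ ψ1 : ℝ → ℝ} {ψ2 : ℝ}
    (h0 : ∀ t > 0, HasDerivAt ψ (ψ1 t) t) (h1 : HasDerivAt ψ1 ψ2 (T w)) (hpos : 0 < T w) (e : ℂ) :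
    fderiv ℝ (fun y => fderiv ℝ (fun v => ψ (T v)) y e) w e
      = ψ1 (T w) * fderiv ℝ (fun y => fderiv ℝ T y e) w e + ψ2 * (fderiv ℝ T w e) ^ 2 := by
  have hev : ∀ᶠ y in nhds w, DifferentiableAt ℝ T y := by
    filter_upwards [hT.eventually (by simp)] with y hy
    exact hy.differentiableAt (by norm_num)
  have hev2 : ∀ᶠ y in nhds w, 0 < T y :=
    hT.continuousAt.eventually (lt_mem_nhds hpos)
  have heq : (fun y => fderiv ℝ (fun v => ψ (T v)) y e) =ᶠ[nhds w]
      fun y => ψ1 (T y) * fderiv ℝ T y e := by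
    filter_upwards [hev, hev2] with y hy hy2
    have := ((h0 _ hy2).comp_hasFDerivAt y hy.hasFDerivAt).fderiv
    simp only [Function.comp_def] at this
    rw [this]
    simp
  rw [heq.fderiv_eq]
  have hd : DifferentiableAt ℝ (fun y => fderiv ℝ T y e) w := by
    have : DifferentiableAt ℝ (fderiv ℝ T) w :=
      (hT.fderiv_right (m := 1) (by norm_num)).differentiableAt (by norm_num)
    exact this.clm_apply (differentiableAt_const e)
  have h2 := (h1.comp_hasFDerivAt w hev.self_of_nhds.hasFDerivAt)
  have := (h2.mul hd.hasFDerivAt).fderiv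
  have e3 : fderiv ℝ (fun y => ψ1 (T y) * fderiv ℝ T y e) w = _ := this
  rw [e3]
  simp
  ring

lemma dd_sum {n : ℕ} {a : Fin n → ℂ → ℝ} {w : ℂ} (ha : ∀ k, ContDiffAt ℝ 2 (a k) w) (c : ℝ) (e : ℂ) :
    fderiv ℝ (fun v => ∑ k, a k v ^ 2 + c) w e = 2 * ∑ k, a k w * fderiv ℝ (a k) w e ∧
    fderiv ℝ (fun y => fderiv ℝ (fun v => ∑ k, a k v ^ 2 + c) y e) w e
      = 2 * ∑ k, (fderiv ℝ (a k) w e) ^ 2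
        + 2 * ∑ k, a k w * fderiv ℝ (fun y => fderiv ℝ (a k) y e) w e := by
  have hev : ∀ᶠ y in nhds w, ∀ k, DifferentiableAt ℝ (a k) y := by
    rw [Filter.eventually_all]
    intro k
    filter_upwards [(ha k).eventually (by simp)] with y hy
    exact hy.differentiableAt (by norm_num)
  have heq : (fun y => fderiv ℝ (fun v => ∑ k, a k v ^ 2 + c) y e) =ᶠ[nhds w]
      fun y => ∑ k, 2 * (a k y * fderiv ℝ (a k) y e) := by
    filter_upwards [hev] with y hy
    have h1 := ((HasFDerivAt.fun_sum (u := Finset.univ) (A := fun k v => a k v ^ 2)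
      (fun k _ => (hy k).hasFDerivAt.pow 2)).add_const c).fderiv
    rw [h1]
    simp [mul_assoc]
  refine ⟨?_, ?_⟩
  · rw [Finset.mul_sum]; exact heq.self_of_nhds
  rw [heq.fderiv_eq]
  have hd : ∀ k, DifferentiableAt ℝ (fun y => fderiv ℝ (a k) y e) w := by
    intro k
    have : DifferentiableAt ℝ (fderiv ℝ (a k)) w :=
      ((ha k).fderiv_right (m := 1) (by norm_num)).differentiableAt (by norm_num)
    exact this.clm_apply (differentiableAt_const e)
  have h2 := (HasFDerivAt.fun_sum (u := Finset.univ) (A := fun k y => 2 * (a k y * fderiv ℝ (a k) y e))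
      (fun k _ => ((hev.self_of_nhds k).hasFDerivAt.mul (hd k).hasFDerivAt).const_mul 2)).fderiv
  rw [h2]
  simp only [FunLike.coe_sum, Finset.sum_apply, Finset.mul_sum, ← Finset.sum_add_distrib]
  refine Finset.sum_congr rfl fun k _ => ?_
  simp
  ring

lemma gram_bound {V : Type*} [NormedAddCommGroup V] [InnerProductSpace ℝ V] (x p q : V) (E m : ℝ)
    (hp : ‖p‖ ^ 2 ≤ E / 2 * (1 + m)) (hq : ‖q‖ ^ 2 ≤ E / 2 * (1 + m))
    (hpq : |inner ℝ p q| ≤ E / 2 * m) :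
    (inner ℝ x p) ^ 2 + (inner ℝ x q) ^ 2 ≤ ‖x‖ ^ 2 * (E / 2 * (1 + 2 * m)) := by
  set a := inner ℝ x p
  set b := inner ℝ x q
  set S := a ^ 2 + b ^ 2 with hS
  have hS0 : 0 ≤ S := by positivity
  have h1 : inner ℝ x (a • p + b • q) = S := by
    rw [inner_add_right, inner_smul_right, inner_smul_right]; ring
  have h2 : S ^ 2 ≤ ‖x‖ ^ 2 * ‖a • p + b • q‖ ^ 2 := by
    rw [← mul_pow]
    apply pow_le_pow_left₀ hS0
    rw [← h1]; exact real_inner_le_norm _ _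
  have h3 : ‖a • p + b • q‖ ^ 2 = a ^ 2 * ‖p‖ ^ 2 + 2 * (a * b * inner ℝ p q) + b ^ 2 * ‖q‖ ^ 2 := by
    rw [norm_add_sq_real, norm_smul, norm_smul, inner_smul_left, inner_smul_right, mul_pow, mul_pow]
    simp
    ring
  have h4 : 2 * (a * b * inner ℝ p q) ≤ S * (E / 2 * m) := by
    have : 2 * (a * b * inner ℝ p q) ≤ (2 * |a * b|) * |inner ℝ p q| := by
      rw [mul_assoc 2 |a * b|, ← abs_mul]
      linarith [le_abs_self (a * b * inner ℝ p q)]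
    refine this.trans (mul_le_mul ?_ hpq (abs_nonneg _) hS0)
    rw [abs_mul]
    nlinarith [sq_nonneg (|a| - |b|), sq_abs a, sq_abs b]
  have h5 : ‖a • p + b • q‖ ^ 2 ≤ S * (E / 2 * (1 + 2 * m)) := by
    rw [h3]
    nlinarith [mul_le_mul_of_nonneg_left hp (sq_nonneg a), mul_le_mul_of_nonneg_left hq (sq_nonneg b)]
  have h6 : S * S ≤ S * (‖x‖ ^ 2 * (E / 2 * (1 + 2 * m))) := by
    nlinarith [mul_le_mul_of_nonneg_left h5 (sq_nonneg ‖x‖)]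
  rcases hS0.eq_or_lt with h | h
  · rw [← h]
    have : 0 ≤ E / 2 * m := (abs_nonneg _).trans hpq
    have : 0 ≤ E / 2 * (1 + m) := (sq_nonneg _).trans hp
    have : 0 ≤ E / 2 * (1 + 2 * m) := by nlinarith
    positivity
  · exact le_of_mul_le_mul_left h6 h

lemma bil_bound {n : ℕ} (a : Fin n → Fin n → ℝ) (c : ℝ) (ha : ∀ i j, |a i j| ≤ c)
    (p q : EuclideanSpace ℝ (Fin n)) :
    |∑ i, ∑ j, a i j * p i * q j| ≤ (n:ℝ) ^ 2 * c * (‖p‖ * ‖q‖) := by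
  have : ∀ i j, |a i j * p i * q j| ≤ c * (‖p‖ * ‖q‖) := by
    intro i j
    rw [abs_mul, abs_mul, mul_assoc]
    have hp : |p i| ≤ ‖p‖ := by simpa using PiLp.norm_apply_le p i
    have hq : |q j| ≤ ‖q‖ := by simpa using PiLp.norm_apply_le q j
    have hc : 0 ≤ c := (abs_nonneg _).trans (ha i j)
    gcongr
    exact ha i j
  calc _ ≤ ∑ i, ∑ j, |a i j * p i * q j| :=
        (Finset.abs_sum_le_sum_abs _ _).trans (Finset.sum_le_sum fun i _ => Finset.abs_sum_le_sum_abs _ _)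
    _ ≤ ∑ i : Fin n, ∑ j : Fin n, c * (‖p‖ * ‖q‖) :=
        Finset.sum_le_sum fun i _ => Finset.sum_le_sum fun j _ => this i j
    _ = _ := by simp; ring

/-- final scalar inequality -/
lemma scalar_final (E X R S W : ℝ) (hE : 0 ≤ E) (hX : 0 ≤ X) (hR : 0 < R) (hXR : X ≤ R) (hR1 : R ≤ 1)
    (hS : S ≤ X ^ 2 * (E / 2 * (1 + X / 8))) (hW : |W| ≤ X / 8 * E) :
    0 ≤ (1 / (2 * R ^ 2) + 1 / (2 * R)) * (2 * E + 2 * W)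
      + (-1 / (2 * R ^ 4) - 1 / (4 * R ^ 3)) * (4 * S) := by
  have hW' : -(R / 8 * E) ≤ W := by
    have := neg_le_of_abs_le hW
    have : X / 8 * E ≤ R / 8 * E := by gcongr
    linarith
  have hS' : S ≤ R ^ 2 * (E / 2 * (1 + R / 8)) := hS.trans (by gcongr)
  have : (1 / (2 * R ^ 2) + 1 / (2 * R)) * (2 * E + 2 * W)
      + (-1 / (2 * R ^ 4) - 1 / (4 * R ^ 3)) * (4 * S)
      = ((R ^ 2 + R ^ 3) * (E + W) - (2 + R) * S) / R ^ 4 := by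
    field_simp
    ring
  rw [this]
  apply div_nonneg _ (by positivity)
  have h1 : (R ^ 2 + R ^ 3) * (E - R / 8 * E) ≤ (R ^ 2 + R ^ 3) * (E + W) := by
    gcongr; linarith
  have h2 : (2 + R) * S ≤ (2 + R) * (R ^ 2 * (E / 2 * (1 + R / 8))) := by gcongr
  have h3 : (R ^ 2 + R ^ 3) * (E - R / 8 * E) - (2 + R) * (R ^ 2 * (E / 2 * (1 + R / 8)))
     = R ^ 3 * E * (1 / 4 - 3 / 16 * R) := by ring
  have h4 : 0 ≤ R ^ 3 * E * (1 / 4 - 3 / 16 * R) := by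
    apply mul_nonneg (by positivity); linarith
  linarith

lemma metric_bounds {n : ℕ} (g : EuclideanSpace ℝ (Fin n) → Matrix (Fin n) (Fin n) ℝ)
    (ρ : ℝ) (hρ : 0 < ρ)
    (hsmooth : ∀ i j, ContDiffOn ℝ (⊤ : ℕ∞) (fun x => g x i j) (ball 0 ρ))
    (hnormal0 : g 0 = 1)
    (hnormal1 : ∀ i j, fderiv ℝ (fun x => g x i j) 0 = 0) (η : ℝ) (hη : 0 < η) :
    ∃ δ > 0, δ ≤ ρ ∧ δ ≤ 1 / 2 ∧ ∀ x ∈ ball (0 : EuclideanSpace ℝ (Fin n)) δ,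
      (∀ i j, |g x i j - (1 : Matrix (Fin n) (Fin n) ℝ) i j| ≤ η * ‖x‖) ∧
      ∀ k i j, |christoffel g x k i j| ≤ η := by
  have hsm : ∀ i j, ContDiffAt ℝ (⊤ : ℕ∞) (fun x => g x i j) 0 := fun i j =>
    (hsmooth i j).contDiffAt (ball_mem_nhds _ hρ)
  have h1 : ∀ i j, ∀ᶠ x in nhds (0 : EuclideanSpace ℝ (Fin n)),
      |g x i j - (1 : Matrix (Fin n) (Fin n) ℝ) i j| ≤ η * ‖x‖ := by
    intro i j
    have hd := ((hsm i j).differentiableAt (by simp)).hasFDerivAt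
    rw [hnormal1] at hd
    have := hd.isLittleO.def hη
    simpa [hnormal0] using this
  have hpd : ∀ i j k, ContinuousAt (fun x => pd (fun y => g y i j) x k) 0 := by
    intro i j k
    have : ContinuousAt (fderiv ℝ (fun y => g y i j)) 0 :=
      ((hsm i j).fderiv_right (m := 0) (by simp)).continuousAt
    exact this.clm_apply continuousAt_const
  have hpd0 : ∀ i j k, pd (fun y => g y i j) 0 k = 0 := by
    intro i j k
    simp [pd, hnormal1]
  have hg : ContinuousAt g 0 := by
    exact continuousAt_pi.2 fun i => continuousAt_pi.2 fun j => (hsm i j).continuousAt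
  have hinv : ∀ k l, ContinuousAt (fun x => (g x)⁻¹ k l) 0 := by
    intro k l
    have e : (fun x => (g x)⁻¹ k l) = fun x => (g x).det⁻¹ * (g x).adjugate k l := by
      ext x
      rw [Matrix.inv_def, Ring.inverse_eq_inv']
      rfl
    rw [e]
    have c1 : ContinuousAt (fun x => (g x).det) 0 :=
      (continuous_id.matrix_det : Continuous fun A : Matrix (Fin n) (Fin n) ℝ => A.det).continuousAt.comp hg
    have c2 : ContinuousAt (fun x => (g x).adjugate k l) 0 :=
      ((continuous_id.matrix_adjugate : Continuous fun A : Matrix (Fin n) (Fin n) ℝ => A.adjugate).matrix_elem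
        k l).continuousAt.comp hg
    exact (c1.inv₀ (by simp [hnormal0])).mul c2
  have h2 : ∀ k i j, ∀ᶠ x in nhds (0 : EuclideanSpace ℝ (Fin n)), |christoffel g x k i j| ≤ η := by
    intro k i j
    have hc : ContinuousAt (fun x => christoffel g x k i j) 0 := by
      unfold christoffel
      refine continuousAt_const.mul ?_
      refine tendsto_finsetSum _ fun l _ => ?_
      exact (hinv k l).mul (((hpd j l i).add (hpd i l j)).sub (hpd i j l))
    have h0 : christoffel g 0 k i j = 0 := by
      simp [christoffel, hpd0]
    have := hc.abs.eventually (gt_mem_nhds (show |christoffel g 0 k i j| < η by simpa [h0] using hη))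
    exact this.mono fun x hx => hx.le
  have h3 : ∀ᶠ x in nhds (0 : EuclideanSpace ℝ (Fin n)),
      (∀ i j, |g x i j - (1 : Matrix (Fin n) (Fin n) ℝ) i j| ≤ η * ‖x‖) ∧
      ∀ k i j, |christoffel g x k i j| ≤ η := by
    simp only [Filter.eventually_and, Filter.eventually_all]
    exact ⟨h1, h2⟩
  obtain ⟨d, hd, hb⟩ := Metric.eventually_nhds_iff_ball.1 h3
  refine ⟨min d (min ρ (1 / 2)), by positivity, by simp, by simp, fun x hx => hb x ?_⟩
  exact ball_subset_ball (min_le_left _ _) hx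

def psi (t : ℝ) : ℝ := 1 / 2 * Real.log t + Real.sqrt t

lemma psi_deriv (t : ℝ) (ht : 0 < t) : HasDerivAt psi (1 / (2 * t) + 1 / (2 * Real.sqrt t)) t := by
  have := ((Real.hasDerivAt_log ht.ne').const_mul (1 / 2)).add (Real.hasDerivAt_sqrt ht.ne')
  refine HasDerivAt.congr_deriv this ?_
  field_simp

lemma psi_deriv2 (t : ℝ) (ht : 0 < t) :
    HasDerivAt (fun t => 1 / (2 * t) + 1 / (2 * Real.sqrt t))
      (-1 / (2 * Real.sqrt t ^ 4) - 1 / (4 * Real.sqrt t ^ 3)) t := by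
  have hs : 0 < Real.sqrt t := Real.sqrt_pos.2 ht
  have h1 := (((hasDerivAt_id t).const_mul 2).inv (by simpa using ht.ne'))
  have h2 := (((Real.hasDerivAt_sqrt ht.ne').const_mul 2).inv (by positivity))
  have := h1.add h2
  have e : (fun t => 1 / (2 * t) + 1 / (2 * Real.sqrt t)) =
    (fun y => 2 * id y)⁻¹ + (fun y => 2 * Real.sqrt y)⁻¹ := by ext; simp
  rw [e]
  refine HasDerivAt.congr_deriv this ?_
  have h4 : Real.sqrt t ^ 4 = t ^ 2 := by
    rw [show (4:ℕ) = 2 * 2 by norm_num, pow_mul, Real.sq_sqrt ht.le]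
  rw [h4]
  simp only [id]
  field_simp
  ring

set_option maxHeartbeats 1000000 in
lemma lap_nonneg_pt {n : ℕ} (g : EuclideanSpace ℝ (Fin n) → Matrix (Fin n) (Fin n) ℝ)
    (u : ℂ → EuclideanSpace ℝ (Fin n)) (z : ℂ) (hu : ContDiffAt ℝ 2 u z) (η ε lam : ℝ) (hη0 : 0 ≤ η)
    (hη2 : (n:ℝ) ^ 2 * η ≤ 1 / 16) (hη3 : (n:ℝ) * ((n:ℝ) ^ 2 * η) ≤ 1 / 8)
    (hε : 0 < ε) (hε2 : ε ≤ 1 / 2) (hX2 : ‖u z‖ ≤ 1 / 2)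
    (hg : ∀ i j, |g (u z) i j - (1 : Matrix (Fin n) (Fin n) ℝ) i j| ≤ η * ‖u z‖)
    (hG : ∀ k i j, |christoffel g (u z) k i j| ≤ η)
    (hconf : ∀ v w : ℂ,
    (∑ i : Fin n, ∑ j : Fin n, g (u z) i j * fderiv ℝ u z v i * fderiv ℝ u z w j)
      = lam * (v * (starRingEnd ℂ) w).re)
    (hharm : ∀ k : Fin n,
    lap (fun w => u w k) z + ∑ i : Fin n, ∑ j : Fin n,
      christoffel g (u z) k i j * (px u i z * px u j z + py u i z * py u j z) = 0) :
    0 ≤ lap (fun w => psi (∑ k, u w k ^ 2 + ε ^ 2)) z := by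
  have hua : ∀ k, ContDiffAt ℝ 2 (fun w => u w k) z := fun k => (contDiffAt_euclidean.1 hu) k
  have hud : DifferentiableAt ℝ u z := hu.differentiableAt (by norm_num)
  have hcomp : ∀ k e, fderiv ℝ (fun w => u w k) z e = fderiv ℝ u z e k := by
    intro k e
    have h1 := (((EuclideanSpace.proj k : EuclideanSpace ℝ (Fin n) →L[ℝ] ℝ).hasFDerivAt).comp z
      hud.hasFDerivAt).fderiv
    have h2 : fderiv ℝ (fun w => u w k) z = _ := h1
    rw [h2]; rfl
  set p := fderiv ℝ u z 1 with hp
  set q := fderiv ℝ u z Complex.I with hq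
  set x := u z with hx
  set E := ‖p‖ ^ 2 + ‖q‖ ^ 2 with hE
  set m := (n:ℝ) ^ 2 * (η * ‖x‖) with hm
  have hm16 : 2 * m ≤ ‖x‖ / 8 := by
    have := mul_le_mul_of_nonneg_right hη2 (norm_nonneg x)
    rw [hm]; nlinarith
  have hdiff : ∀ a b : EuclideanSpace ℝ (Fin n),
      |(∑ i, ∑ j, g x i j * a i * b j) - inner ℝ a b| ≤ m * (‖a‖ * ‖b‖) := by
    intro a b
    have := bil_bound (fun i j => g x i j - (1 : Matrix (Fin n) (Fin n) ℝ) i j) _ hg a b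
    convert this using 2
    simp only [sub_mul, Finset.sum_sub_distrib]
    congr 1
    simp [PiLp.inner_apply, Matrix.one_apply, mul_comm]
  have hpp := hdiff p p
  have hqq := hdiff q q
  have hpq := hdiff p q
  rw [hconf] at hpp hqq hpq
  simp only [real_inner_self_eq_norm_sq] at hpp hqq
  simp at hpp hqq hpq
  have hS : (inner ℝ x p) ^ 2 + (inner ℝ x q) ^ 2 ≤ ‖x‖ ^ 2 * (E / 2 * (1 + 2 * m)) := by
    rw [abs_le] at hpp hqq
    have hmm : 0 ≤ m := by positivity
    apply gram_bound
    · nlinarith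
    · nlinarith
    · refine hpq.trans ?_
      nlinarith [mul_nonneg hmm (sq_nonneg (‖p‖ - ‖q‖))]
  have hE0 : 0 ≤ E := by positivity
  set wv : Fin n → ℝ := fun k => lap (fun w => u w k) z with hwv
  have hw : ∀ k, |wv k| ≤ (n:ℝ) ^ 2 * η * E := by
    intro k
    have h1 := bil_bound (fun i j => christoffel g x k i j) η (hG k) p p
    have h2 := bil_bound (fun i j => christoffel g x k i j) η (hG k) q q
    have h3 : wv k = -((∑ i, ∑ j, christoffel g x k i j * p i * p j)
        + ∑ i, ∑ j, christoffel g x k i j * q i * q j) := by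
      rw [← Finset.sum_add_distrib, eq_neg_iff_add_eq_zero, ← hharm k]
      congr 1
      refine Finset.sum_congr rfl fun i _ => ?_
      rw [← Finset.sum_add_distrib]
      refine Finset.sum_congr rfl fun j _ => ?_
      simp only [px, py, hcomp]
      ring
    rw [h3, abs_neg]
    refine (abs_add_le _ _).trans ?_
    rw [hE]
    nlinarith
  have hW : |∑ k, x k * wv k| ≤ ‖x‖ / 8 * E := by
    calc _ ≤ ∑ k, |x k * wv k| := Finset.abs_sum_le_sum_abs _ _
      _ ≤ ∑ k : Fin n, ‖x‖ * ((n:ℝ) ^ 2 * η * E) := by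
          refine Finset.sum_le_sum fun k _ => ?_
          rw [abs_mul]
          have hp : |x k| ≤ ‖x‖ := by simpa using PiLp.norm_apply_le x k
          exact mul_le_mul hp (hw k) (abs_nonneg _) (norm_nonneg _)
      _ = ((n:ℝ) * ((n:ℝ) ^ 2 * η)) * (‖x‖ * E) := by simp; ring
      _ ≤ 1 / 8 * (‖x‖ * E) := by gcongr
      _ = _ := by ring
  have hnx : ∑ k, x k ^ 2 = ‖x‖ ^ 2 := by rw [EuclideanSpace.real_norm_sq_eq]
  have hT : ContDiffAt ℝ 2 (fun w => ∑ k, u w k ^ 2 + ε ^ 2) z := by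
    apply ContDiffAt.add _ contDiffAt_const
    exact ContDiffAt.sum fun k _ => (hua k).pow 2
  set T := ‖x‖ ^ 2 + ε ^ 2 with hTdef
  have hTpos : 0 < T := by positivity
  have hTz : ∑ k, u z k ^ 2 + ε ^ 2 = T := by rw [hTdef, ← hnx]
  have hTz' : ∑ k, x k ^ 2 + ε ^ 2 = T := hTz
  have hmain : ∀ e, _ := fun e => dd_comp hT psi_deriv
    (by simp only [hTz]; exact psi_deriv2 T hTpos) (by simp only [hTz]; exact hTpos) e
  have hinner : ∀ a : EuclideanSpace ℝ (Fin n), ∑ k, x k * a k = inner ℝ x a := by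
    intro a; simp [PiLp.inner_apply, mul_comm]
  have hnp : ∑ k, p k ^ 2 = ‖p‖ ^ 2 := by rw [EuclideanSpace.real_norm_sq_eq]
  have hnq : ∑ k, q k ^ 2 = ‖q‖ ^ 2 := by rw [EuclideanSpace.real_norm_sq_eq]
  have hfin := scalar_final E ‖x‖ (Real.sqrt T) ((inner ℝ x p) ^ 2 + (inner ℝ x q) ^ 2)
    (∑ k, x k * wv k) hE0 (norm_nonneg _) (Real.sqrt_pos.2 hTpos)
    (Real.le_sqrt_of_sq_le (by rw [hTdef]; nlinarith))
    (by rw [Real.sqrt_le_left zero_le_one]; rw [hTdef]; nlinarith [norm_nonneg x])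
    (hS.trans (by gcongr)) hW
  have hgoal : lap (fun w => psi (∑ k, u w k ^ 2 + ε ^ 2)) z =
     (1 / (2 * Real.sqrt T ^ 2) + 1 / (2 * Real.sqrt T)) * (2 * E + 2 * ∑ k, x k * wv k)
      + (-1 / (2 * Real.sqrt T ^ 4) - 1 / (4 * Real.sqrt T ^ 3)) *
        (4 * ((inner ℝ x p) ^ 2 + (inner ℝ x q) ^ 2)) := by
    unfold lap
    rw [hmain, hmain, (dd_sum hua _ 1).1, (dd_sum hua _ 1).2, (dd_sum hua _ Complex.I).1,
      (dd_sum hua _ Complex.I).2]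
    simp only [hTz', hcomp, ← hp, ← hq, ← hx, hinner p, hinner q, hnp, hnq]
    rw [Real.sq_sqrt hTpos.le]
    have : ∑ k, x k * wv k = ∑ k, x k * fderiv ℝ (fun y => fderiv ℝ (fun w => u w k) y 1) z 1
      + ∑ k, x k * fderiv ℝ (fun y => fderiv ℝ (fun w => u w k) y Complex.I) z Complex.I := by
      rw [← Finset.sum_add_distrib]
      refine Finset.sum_congr rfl fun k _ => ?_
      simp only [hwv, lap]
      ring
    rw [this]
    ring
  rw [hgoal]
  exact hfin


lemma psi_norm {n : ℕ} (x : EuclideanSpace ℝ (Fin n)) (ε : ℝ) (hε : 0 < ε) :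
    psi (∑ k, x k ^ 2 + ε ^ 2) = Real.log (Real.sqrt (‖x‖ ^ 2 + ε ^ 2)) + Real.sqrt (‖x‖ ^ 2 + ε ^ 2) := by
  rw [psi, ← EuclideanSpace.real_norm_sq_eq, Real.log_sqrt (by positivity)]
  ring

/-- Passage to the limit `ε → 0` by Fatou's lemma. -/
lemma limit_step {n : ℕ} (v : ℝ → EuclideanSpace ℝ (Fin n)) (hv : Continuous v)
    (hb : ∀ θ, ‖v θ‖ ≤ 1 / 2) (a : ℝ)
    (h : ∀ ε : ℝ, 0 < ε → ε ≤ 1 / 2 →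
      2 * π * a ≤ ∫ θ in (0:ℝ)..(2 * π), psi (∑ k, v θ k ^ 2 + ε ^ 2)) :
    2 * π * a ≤ ∫ θ in (0:ℝ)..(2 * π), (Real.log ‖v θ‖ + ‖v θ‖) := by
  have h2pi : (0:ℝ) ≤ 2 * π := by positivity
  set e : ℕ → ℝ := fun j => 1 / ((j:ℝ) + 2) with he
  have he0 : ∀ j, 0 < e j := fun j => by simp only [he]; positivity
  have he2 : ∀ j, e j ≤ 1 / 2 := fun j => by
    simp only [he]
    apply one_div_le_one_div_of_le (by norm_num); linarith [(Nat.cast_nonneg j : (0:ℝ) ≤ j)]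
  have hlim : Filter.Tendsto e Filter.atTop (nhds 0) := by
    have := (tendsto_one_div_add_atTop_nhds_zero_nat (𝕜 := ℝ)).comp (Filter.tendsto_add_atTop_nat 1)
    refine this.congr fun j => ?_
    simp [he]; ring
  set F : ℕ → ℝ → ℝ := fun j θ => Real.log (Real.sqrt (‖v θ‖ ^ 2 + e j ^ 2))
    + Real.sqrt (‖v θ‖ ^ 2 + e j ^ 2) with hF
  set G : ℝ → ℝ := fun θ => Real.log ‖v θ‖ + ‖v θ‖ with hG
  have hFc : ∀ j, Continuous (F j) := by
    intro j
    have hs : Continuous fun θ => Real.sqrt (‖v θ‖ ^ 2 + e j ^ 2) := by fun_prop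
    refine (hs.log fun θ => ?_).add hs
    have := he0 j
    positivity
  have hF1 : ∀ j θ, F j θ ≤ 1 := by
    intro j θ
    have h1 : Real.sqrt (‖v θ‖ ^ 2 + e j ^ 2) ≤ 1 := by
      rw [Real.sqrt_le_left zero_le_one]
      nlinarith [norm_nonneg (v θ), hb θ, he0 j, he2 j]
    have := Real.log_nonpos (Real.sqrt_nonneg _) h1
    simp only [hF]; linarith
  have hG1 : ∀ θ, G θ ≤ 1 := by
    intro θ
    have h1 : ‖v θ‖ ≤ 1 := (hb θ).trans (by norm_num)
    have := Real.log_nonpos (norm_nonneg _) h1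
    simp only [hG]; linarith
  have hGm : Measurable G := by
    have : Measurable fun θ => ‖v θ‖ := hv.norm.measurable
    exact (Real.measurable_log.comp this).add this
  set μ := MeasureTheory.volume.restrict (Ioc (0:ℝ) (2 * π)) with hμ
  have hμ1 : μ.real univ = 2 * π := by
    simp [hμ, MeasureTheory.measureReal_def, Real.pi_pos.le]
  have hFi : ∀ j, MeasureTheory.Integrable (F j) μ := fun j =>
    ((hFc j).integrableOn_Ioc)
  have hFint : ∀ j, 2 * π * a ≤ ∫ θ, F j θ ∂μ := by
    intro j
    have := h (e j) (he0 j) (he2 j)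
    rw [intervalIntegral.integral_of_le h2pi] at this
    simpa only [psi_norm _ _ (he0 j)] using this
  have hFl : ∀ j, ∫⁻ θ, ENNReal.ofReal (1 - F j θ) ∂μ ≤ ENNReal.ofReal (2 * π - 2 * π * a) := by
    intro j
    rw [← MeasureTheory.ofReal_integral_eq_lintegral_ofReal]
    · apply ENNReal.ofReal_le_ofReal
      rw [MeasureTheory.integral_sub (MeasureTheory.integrable_const _) (hFi j)]
      simp only [MeasureTheory.integral_const, hμ1, smul_eq_mul, mul_one]
      linarith [hFint j]
    · exact (MeasureTheory.integrable_const _).sub (hFi j)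
    · exact Filter.Eventually.of_forall fun θ => sub_nonneg.2 (hF1 j θ)
  have hpt : ∀ θ, ENNReal.ofReal (1 - G θ) ≤
      Filter.liminf (fun j => ENNReal.ofReal (1 - F j θ)) Filter.atTop := by
    intro θ
    by_cases h0 : v θ = 0
    · apply Filter.le_liminf_of_le
      · isBoundedDefault
      · have hl : Filter.Tendsto (fun j => Real.log (e j) + e j) Filter.atTop Filter.atBot := by
          have h1 : Filter.Tendsto e Filter.atTop (nhdsWithin 0 (Ioi 0)) :=
            tendsto_nhdsWithin_iff.2 ⟨hlim, Filter.Eventually.of_forall he0⟩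
          exact Filter.Tendsto.atBot_add (Real.tendsto_log_nhdsGT_zero.comp h1) hlim
        filter_upwards [hl.eventually_le_atBot 0] with j hj
        apply ENNReal.ofReal_le_ofReal
        simp only [hF, hG, h0, norm_zero, Real.log_zero]
        rw [show (0:ℝ) ^ 2 + e j ^ 2 = e j ^ 2 by ring, Real.sqrt_sq (he0 j).le]
        linarith
    · have hn : ‖v θ‖ ≠ 0 := norm_ne_zero_iff.2 h0
      have hs : Filter.Tendsto (fun j => Real.sqrt (‖v θ‖ ^ 2 + e j ^ 2)) Filter.atTop (nhds ‖v θ‖) := by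
        have := ((hlim.pow 2).const_add (‖v θ‖ ^ 2)).sqrt
        simpa [Real.sqrt_sq (norm_nonneg _)] using this
      have ht : Filter.Tendsto (fun j => ENNReal.ofReal (1 - F j θ)) Filter.atTop
          (nhds (ENNReal.ofReal (1 - G θ))) :=
        ENNReal.tendsto_ofReal (tendsto_const_nhds.sub ((hs.log hn).add hs))
      rw [ht.liminf_eq]
  have hGl : ∫⁻ θ, ENNReal.ofReal (1 - G θ) ∂μ ≤ ENNReal.ofReal (2 * π - 2 * π * a) := by
    refine (MeasureTheory.lintegral_mono hpt).trans ?_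
    refine (MeasureTheory.lintegral_liminf_le fun j =>
      ((continuous_const.sub (hFc j)).measurable.ennreal_ofReal)).trans ?_
    refine (Filter.liminf_le_liminf (v := fun _ => ENNReal.ofReal (2 * π - 2 * π * a))
      (Filter.Eventually.of_forall hFl)).trans ?_
    simp
  have hnn : 0 ≤ᵐ[μ] fun θ => 1 - G θ := Filter.Eventually.of_forall fun θ => sub_nonneg.2 (hG1 θ)
  have hms : Measurable fun θ => 1 - G θ := measurable_const.sub hGm
  have hint : MeasureTheory.Integrable (fun θ => 1 - G θ) μ := by
    refine ⟨hms.aestronglyMeasurable, ?_⟩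
    rw [MeasureTheory.hasFiniteIntegral_iff_ofReal hnn]
    exact hGl.trans_lt ENNReal.ofReal_lt_top
  have hGi : MeasureTheory.Integrable G μ := by
    have := (MeasureTheory.integrable_const (μ := μ) (1:ℝ)).sub hint
    refine this.congr (Filter.Eventually.of_forall fun θ => ?_)
    simp
  have ha : 0 ≤ 2 * π - 2 * π * a := by
    have h1 := hFint 0
    have h2 : ∫ θ, F 0 θ ∂μ ≤ ∫ θ, (1:ℝ) ∂μ :=
      MeasureTheory.integral_mono (hFi 0) (MeasureTheory.integrable_const _) (hF1 0)
    simp only [MeasureTheory.integral_const, hμ1, smul_eq_mul, mul_one] at h2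
    linarith
  rw [← MeasureTheory.ofReal_integral_eq_lintegral_ofReal hint hnn, ENNReal.ofReal_le_ofReal_iff ha,
    MeasureTheory.integral_sub (MeasureTheory.integrable_const _) hGi] at hGl
  simp only [MeasureTheory.integral_const, hμ1, smul_eq_mul, mul_one] at hGl
  rw [intervalIntegral.integral_of_le h2pi]
  linarith

/-- Let `g` be a smooth Riemannian metric on a coordinate ball
`B(0,ρ) ⊂ ℝⁿ` in normal coordinates at `p = 0` (`g(0) = δ`, `dg(0) = 0`).
Then for `A > 0` sufficiently large the function `φ(x) = log|x| + A|x|` is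
minimal plurisubharmonic near the origin: its composition with every smooth
conformal harmonic immersion `u : 𝔻 → B(0,δ)` satisfies the sub-mean value
inequality on `𝔻`. -/
theorem log_plus_A_norm_is_MPSH
    (g : EuclideanSpace ℝ (Fin n) → Matrix (Fin n) (Fin n) ℝ)
    (ρ : ℝ) (hρ : 0 < ρ)
    (hsmooth : ∀ i j, ContDiffOn ℝ (⊤ : ℕ∞) (fun x => g x i j) (ball 0 ρ))
    (hsym : ∀ x ∈ ball (0 : EuclideanSpace ℝ (Fin n)) ρ, (g x).IsSymm)
    (hposdef : ∀ x ∈ ball (0 : EuclideanSpace ℝ (Fin n)) ρ,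
      ∀ v : EuclideanSpace ℝ (Fin n), v ≠ 0 → 0 < ∑ i, ∑ j, g x i j * v i * v j)
    (hnormal0 : g 0 = 1)
    (hnormal1 : ∀ i j, fderiv ℝ (fun x => g x i j) 0 = 0) :
    ∃ A > (0 : ℝ), ∃ δ > (0 : ℝ), δ ≤ ρ ∧
      ∀ u : ℂ → EuclideanSpace ℝ (Fin n),
        ContDiffOn ℝ (⊤ : ℕ∞) u (ball 0 1) →
        MapsTo u (ball 0 1) (ball (0 : EuclideanSpace ℝ (Fin n)) δ) →
        ConformalImmersionWrt g u (ball 0 1) →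
        HarmonicWrt g u (ball 0 1) →
        ∀ z : ℂ, ∀ r : ℝ, 0 < r → closedBall z r ⊆ ball (0 : ℂ) 1 → u z ≠ 0 →
          Real.log ‖u z‖ + A * ‖u z‖ ≤ (2 * π)⁻¹ *
            ∫ θ in (0:ℝ)..(2 * π),
              (Real.log ‖u (z + r * Complex.exp (θ * Complex.I))‖ +
                A * ‖u (z + r * Complex.exp (θ * Complex.I))‖) := by
  have hN : (0:ℝ) ≤ (n:ℝ) := Nat.cast_nonneg n
  set D : ℝ := 16 * ((n:ℝ) ^ 3 + (n:ℝ) ^ 2 + 1) with hD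
  have hDpos : 0 < D := by positivity
  obtain ⟨δ, hδ, hδρ, hδ2, hbd⟩ := metric_bounds g ρ hρ hsmooth hnormal0 hnormal1 (1 / D) (by positivity)
  refine ⟨1, one_pos, δ, hδ, hδρ, ?_⟩
  intro u hu hmaps hconf hharm z r hr hz huz
  obtain ⟨-, lam, hlam⟩ := hconf
  have hη2 : (n:ℝ) ^ 2 * (1 / D) ≤ 1 / 16 := by
    rw [mul_one_div, div_le_div_iff₀ hDpos (by norm_num), hD]
    nlinarith [pow_nonneg hN 3]
  have hη3 : (n:ℝ) * ((n:ℝ) ^ 2 * (1 / D)) ≤ 1 / 8 := by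
    rw [← mul_assoc, mul_one_div, div_le_div_iff₀ hDpos (by norm_num), hD]
    nlinarith [pow_nonneg hN 3, pow_nonneg hN 2]
  have hnb : ∀ w ∈ ball (0:ℂ) 1, ‖u w‖ ≤ 1 / 2 := by
    intro w hw
    have := hmaps hw
    rw [mem_ball_zero_iff] at this
    linarith
  have hu2 : ∀ w ∈ ball (0:ℂ) 1, ContDiffAt ℝ 2 u w := fun w hw =>
    (hu.contDiffAt (isOpen_ball.mem_nhds hw)).of_le (WithTop.coe_le_coe.2 (le_top : (2:ℕ∞) ≤ ⊤))
  have key : ∀ ε : ℝ, 0 < ε → ε ≤ 1 / 2 →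
      2 * π * psi (∑ k, u z k ^ 2 + ε ^ 2) ≤ ∫ θ in (0:ℝ)..(2 * π),
        psi (∑ k, u (z + r * Complex.exp (θ * Complex.I)) k ^ 2 + ε ^ 2) := by
    intro ε hε hε2
    refine submean_local (fun w => psi (∑ k, u w k ^ 2 + ε ^ 2)) ?_ z r hr hz ?_
    · intro w hw
      have hT : ContDiffAt ℝ 2 (fun w => ∑ k, u w k ^ 2 + ε ^ 2) w := by
        apply ContDiffAt.add _ contDiffAt_const
        exact ContDiffAt.sum fun k _ => ((contDiffAt_euclidean.1 (hu2 w hw)) k).pow 2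
      have hne : ∑ k, u w k ^ 2 + ε ^ 2 ≠ 0 := by positivity
      exact ((contDiffAt_const.mul (hT.log hne)).add (hT.sqrt hne)).contDiffWithinAt
    · intro w hw
      have hb := hbd (u w) (hmaps hw)
      exact lap_nonneg_pt g u w (hu2 w hw) (1 / D) ε (Real.exp (lam w)) (by positivity) hη2 hη3 hε hε2
        (hnb w hw) hb.1 hb.2 (hlam w hw) (hharm w hw)
  have hcirc : ∀ θ : ℝ, z + r * Complex.exp (θ * Complex.I) ∈ ball (0:ℂ) 1 := fun θ => hz (by
    simp [Complex.norm_exp_ofReal_mul_I, abs_of_pos hr])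
  have hfin := limit_step (fun θ : ℝ => u (z + r * Complex.exp (θ * Complex.I))) (by
      have : Continuous fun θ : ℝ => z + r * Complex.exp (θ * Complex.I) := by fun_prop
      exact hu.continuousOn.comp_continuous this hcirc)
    (fun θ => hnb _ (hcirc θ)) (Real.log ‖u z‖ + ‖u z‖) (by
      intro ε hε hε2
      refine le_trans ?_ (key ε hε hε2)
      rw [psi_norm _ _ hε]
      have h0 : 0 < ‖u z‖ := norm_pos_iff.2 huz
      have h1 : ‖u z‖ ≤ Real.sqrt (‖u z‖ ^ 2 + ε ^ 2) := Real.le_sqrt_of_sq_le (by nlinarith)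
      have h2 := Real.log_le_log h0 h1
      have := Real.pi_pos
      gcongr)
  simp only [one_mul]
  rw [← div_eq_inv_mul, le_div_iff₀ (by positivity)]
  linarith

end
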